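/- At the minimizer p_opt = n / Real.sqrt (4 - n^2), the second derivative of J equals (4 - n^2)^(3/2) / (4*n); i.e., deriv (deriv J) p_opt = (4 - n^2) * Real.sqrt (4 - n^2) / (4*n). (This is the curvature constant governing the Gaussian fluctuations of arm lengths.) -/

import Mathlib

/-!
For `p > 0`, put `L p = (2/n) * p / sqrt (1 + p^2)`. The logarithmic derivative of `L` is
`1/p - p/(1+p^2) = 1/(p(1+p^2))`. In the derivative of `J`, the contribution
`p * L'/L = 1/(1+p^2)` cancels the derivative of `arctan`, so `J' = log L` on `p > 0` and
`J'' = 1/(p(1+p^2))`. At `p = n / sqrt (4-n^2)` one has `1 + p^2 = 4/(4-n^2)`, which gives the value.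
-/

/-- The large-deviation function for the number of separating loops,
`J(p) = p * log((2/n) * p / sqrt (1+p^2)) + arccot p - arccos (n/2)`,
where `arccot p = pi/2 - arctan p`. -/
noncomputable def J (n p : ℝ) : ℝ :=
  p * Real.log ((2 / n) * p / Real.sqrt (1 + p ^ 2)) +
    (Real.pi / 2 - Real.arctan p) - Real.arccos (n / 2)

lemma hasDerivAt_logRatio (n p : ℝ) (hn : 0 < n) (hp : 0 < p) :
    HasDerivAt (fun p : ℝ => Real.log ((2 / n) * p / Real.sqrt (1 + p ^ 2)))
      (1 / (p * (1 + p ^ 2))) p := by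
  have hq : (0 : ℝ) < 1 + p ^ 2 := by positivity
  have hsum : HasDerivAt (fun p : ℝ => Real.log (2 / n) + Real.log p - Real.log (1 + p ^ 2) / 2)
      (1 / (p * (1 + p ^ 2))) p := by
    have hsq : HasDerivAt (fun p : ℝ => 1 + p ^ 2) (2 * p) p := by
      simpa using (hasDerivAt_pow 2 p).const_add 1
    refine (((Real.hasDerivAt_log hp.ne').const_add (Real.log (2 / n))).sub
      ((hsq.log hq.ne').div_const 2)).congr_deriv ?_
    field_simp
    ring
  refine hsum.congr_of_eventuallyEq ?_
  filter_upwards [lt_mem_nhds hp] with x hx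
  have hx' : (0 : ℝ) < 1 + x ^ 2 := by positivity
  rw [Real.log_div (by positivity) (by positivity), Real.log_mul (by positivity) hx.ne',
    Real.log_sqrt hx'.le]

lemma hasDerivAt_J (n p : ℝ) (hn : 0 < n) (hp : 0 < p) :
    HasDerivAt (J n) (Real.log ((2 / n) * p / Real.sqrt (1 + p ^ 2))) p := by
  have h := ((((hasDerivAt_id p).mul (hasDerivAt_logRatio n p hn hp)).add
    ((Real.hasDerivAt_arctan p).const_sub (Real.pi / 2))).sub_const (Real.arccos (n / 2)))
  refine HasDerivAt.congr_deriv (f := J n) h ?_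
  have hq : (0 : ℝ) < 1 + p ^ 2 := by positivity
  have hcancel : p * (1 / (p * (1 + p ^ 2))) = 1 / (1 + p ^ 2) := by field_simp
  simp only [id, hcancel]
  ring

/-- At the minimizer `p_opt = n / sqrt (4-n^2)`, the second derivative of `J` equals
`(4-n^2)^(3/2)/(4n)`. -/
theorem deriv2_J_at_pOpt (n : ℝ) (hn0 : 0 < n) (hn2 : n < 2) :
    deriv (deriv (J n)) (n / Real.sqrt (4 - n ^ 2)) =
      (4 - n ^ 2) * Real.sqrt (4 - n ^ 2) / (4 * n) := by
  have h4 : 0 < 4 - n ^ 2 := by nlinarith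
  have hs : 0 < Real.sqrt (4 - n ^ 2) := Real.sqrt_pos.mpr h4
  have hp : 0 < n / Real.sqrt (4 - n ^ 2) := by positivity
  have hderiv : deriv (J n) =ᶠ[nhds (n / Real.sqrt (4 - n ^ 2))]
      fun p : ℝ => Real.log ((2 / n) * p / Real.sqrt (1 + p ^ 2)) := by
    filter_upwards [lt_mem_nhds hp] with x hx
    exact (hasDerivAt_J n x hn0 hx).deriv
  rw [hderiv.deriv_eq, (hasDerivAt_logRatio n _ hn0 hp).deriv]
  have hone : 1 + (n / Real.sqrt (4 - n ^ 2)) ^ 2 = 4 / (4 - n ^ 2) := by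
    rw [div_pow, Real.sq_sqrt h4.le]
    field_simp
    ring
  rw [hone]
  field_simp
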